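/- Let T > 0, let K be a Volterra kernel on [0,T] satisfying Condition (A) with exponent α ∈ [0, 1/4), and let R(s,t) := ∫_0^{min(s,t)} K(t,r) K(s,r) dr. If φ₁, φ₂: [0,T] → ℝ are λ-Hölder continuous with λ > α, then the 2D Young–Stieltjes integral ∫_{[0,T]²} φ₁(s) φ₂(t) dR(s,t) exists and equals ∫_0^T (K*φ₁)(r) (K*φ₂)(r) dr. -/

import Mathlib

open MeasureTheory Set

noncomputable section

namespace YS

variable {E : Type*} [NormedAddCommGroup E] [NormedSpace ℝ E]

/-- A Volterra kernel: a measurable `K : ℝ² → ℝ` with `K t s = 0` whenever `s ≥ t`. -/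
def IsVolterraKernel (K : ℝ → ℝ → ℝ) : Prop :=
  Measurable (Function.uncurry K) ∧ ∀ t s : ℝ, t ≤ s → K t s = 0

/-- Condition (A) with exponent `α` and constant `C`; here `K' t s` denotes the partial
derivative `∂K(t,s)/∂t`, whose existence is part of the condition. -/
def CondA (T α C : ℝ) (K K' : ℝ → ℝ → ℝ) : Prop :=
  (∀ s t : ℝ, 0 < s → s < t → t ≤ T → |K t s| ≤ C * s ^ (-α) * (t - s) ^ (-α)) ∧
  ∀ s t : ℝ, 0 < s → s < t → t ≤ T →
    HasDerivAt (fun r => K r s) (K' t s) t ∧ |K' t s| ≤ C * (t - s) ^ (-(α + 1))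

/-- The operator `𝒦*`:  `(𝒦*φ)(s) = φ(s)K(T,s) + ∫_s^T [φ(r) − φ(s)] ∂K(r,s)/∂r dr`. -/
def Kstar (T : ℝ) (K K' : ℝ → ℝ → ℝ) (φ : ℝ → E) (s : ℝ) : E :=
  K T s • φ s + ∫ r in s..T, K' r s • (φ r - φ s)

/-- The operator `A^K`. -/
def AK (T : ℝ) (K' : ℝ → ℝ → ℝ) (φ : ℝ → E) (s : ℝ) : E :=
  ∫ r in s..T, K' r s • (φ r - φ s)

/-- Rectangular increment `f(u₁,u₂;v₁,v₂)`. -/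
def rectInc (ψ : ℝ → ℝ → E) (u₁ u₂ v₁ v₂ : ℝ) : E :=
  ψ u₁ v₁ + ψ u₂ v₂ - ψ u₁ v₂ - ψ u₂ v₁

/-- The operator `B^K`. -/
def BK (T : ℝ) (K' : ℝ → ℝ → ℝ) (ψ : ℝ → ℝ → E) (u v : ℝ) : E :=
  ∫ r₂ in v..T, ∫ r₁ in u..T, (K' r₁ u * K' r₂ v) • rectInc ψ u r₁ v r₂

/-- The operator `𝒦* ⊗ 𝒦*`. -/
def KstarT (T : ℝ) (K K' : ℝ → ℝ → ℝ) (ψ : ℝ → ℝ → E) (u v : ℝ) : E :=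
  (K T u * K T v) • ψ u v + K T v • AK T K' (fun x => ψ x v) u +
    K T u • AK T K' (fun y => ψ u y) v + BK T K' ψ u v

/-- A partition `0 = s₀ < s₁ < ⋯ < s_n = T` of `[0,T]`. -/
structure Partition (T : ℝ) where
  n : ℕ
  pts : ℕ → ℝ
  n_pos : 0 < n
  first : pts 0 = 0
  last : pts n = T
  lt : ∀ i < n, pts i < pts (i + 1)

/-- Mesh of a partition: the largest increment. -/
def Partition.mesh {T : ℝ} (P : Partition T) : ℝ :=
  (Finset.range P.n).sup' (Finset.nonempty_range_iff.mpr P.n_pos.ne')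
    fun i => P.pts (i + 1) - P.pts i

/-- One-dimensional step approximation `φ^π`. -/
def step1 {T : ℝ} (P : Partition T) (φ : ℝ → E) (s : ℝ) : E :=
  ∑ i ∈ Finset.range P.n,
    (Set.Ico (P.pts i) (P.pts (i + 1))).indicator (fun _ => φ (P.pts i)) s

/-- Two-dimensional step approximation `ψ^π` for the grid partition `P × Q`. -/
def step2 {T : ℝ} (P Q : Partition T) (ψ : ℝ → ℝ → E) (u v : ℝ) : E :=
  ∑ i ∈ Finset.range P.n, ∑ j ∈ Finset.range Q.n,
    ((Set.Ico (P.pts i) (P.pts (i + 1))) ×ˢ (Set.Ico (Q.pts j) (Q.pts (j + 1)))).indicator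
      (fun _ => ψ (P.pts i) (Q.pts j)) (u, v)

/-- `λ`-Hölder continuity on `[0,T]` with constant `C`. -/
def IsHolderWith (T lam C : ℝ) (φ : ℝ → E) : Prop :=
  ∀ t₁ ∈ Icc (0:ℝ) T, ∀ t₂ ∈ Icc (0:ℝ) T, ‖φ t₁ - φ t₂‖ ≤ C * |t₁ - t₂| ^ lam

/-- `λ`-Hölder continuity on `[0,T]`. -/
def IsHolder (T lam : ℝ) (φ : ℝ → E) : Prop := ∃ C : ℝ, IsHolderWith T lam C φ

/-- `λ`-Hölder bi-continuity with constant `C`. -/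
def IsHolderBiWith (T lam C : ℝ) (ψ : ℝ → ℝ → E) : Prop :=
  (∀ u₁ ∈ Icc (0:ℝ) T, ∀ u₂ ∈ Icc (0:ℝ) T, ∀ v ∈ Icc (0:ℝ) T,
      ‖ψ u₂ v - ψ u₁ v‖ ≤ C * |u₂ - u₁| ^ lam) ∧
  ∀ u ∈ Icc (0:ℝ) T, ∀ v₁ ∈ Icc (0:ℝ) T, ∀ v₂ ∈ Icc (0:ℝ) T,
      ‖ψ u v₂ - ψ u v₁‖ ≤ C * |v₂ - v₁| ^ lam

/-- `λ`-Hölder bi-continuity. -/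
def IsHolderBi (T lam : ℝ) (ψ : ℝ → ℝ → E) : Prop := ∃ C : ℝ, IsHolderBiWith T lam C ψ

/-- Strong `λ`-Hölder bi-continuity with constant `C`. -/
def IsStrongHolderBiWith (T lam C : ℝ) (ψ : ℝ → ℝ → E) : Prop :=
  IsHolderBiWith T lam C ψ ∧
  ∀ u₁ ∈ Icc (0:ℝ) T, ∀ u₂ ∈ Icc (0:ℝ) T, ∀ v₁ ∈ Icc (0:ℝ) T, ∀ v₂ ∈ Icc (0:ℝ) T,
    ‖rectInc ψ u₁ u₂ v₁ v₂‖ ≤ C * |u₂ - u₁| ^ lam * |v₂ - v₁| ^ lam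

/-- Strong `λ`-Hölder bi-continuity. -/
def IsStrongHolderBi (T lam : ℝ) (ψ : ℝ → ℝ → E) : Prop :=
  ∃ C : ℝ, IsStrongHolderBiWith T lam C ψ

/-- The covariance function `R(s,t) = ∫_0^{s∧t} K(t,r)K(s,r) dr` of the Volterra process. -/
def covR (K : ℝ → ℝ → ℝ) (s t : ℝ) : ℝ := ∫ r in (0:ℝ)..(min s t), K t r * K s r

/-- The 2D Riemann–Stieltjes sum of `f` against `g` over the grid partition `P × Q`. -/
def RSsum {T : ℝ} (P Q : Partition T) (f g : ℝ → ℝ → ℝ) : ℝ :=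
  ∑ i ∈ Finset.range P.n, ∑ j ∈ Finset.range Q.n,
    f (P.pts i) (Q.pts j) *
      rectInc g (P.pts i) (P.pts (i + 1)) (Q.pts j) (Q.pts (j + 1))

/-! Integrating `∂K/∂t` gives `𝒦*1_{[a,b)} = K(b,·) - K(a,·)` on `(0,T)`. Since `R(s,t)` is the
inner product of `K(s,·)` and `K(t,·)` in `L²(0,T)`, its rectangular increments are inner products
of such functions, and the Riemann–Stieltjes sum over `P × Q` is exactly `∫ 𝒦*φ₁^P · 𝒦*φ₂^Q`. By
continuity of the inner product it remains to see that `𝒦*φ^π → 𝒦*φ` in `L²(0,T)` as the mesh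
tends to zero.

For `r` in a cell `[u,v)` of `π`, the value `𝒦*(φ^π - φ)(r)` splits into an integral over `[r,v]`,
an integral over `[v,T]` and a boundary term at `v`. The Hölder condition makes each of them a
positive power of the mesh times a function bounded in `L²`. The boundary term is the critical
one: `|K(v,r)|` blows up like `(v - r)^(-α)` in every cell, and this is square integrable,
uniformly in `π` after normalisation by the length of the cell, because `α < 1/2`. -/

open Filter Topology

section PowerEstimates

lemma rpow_add_le_rpow_mul_rpow {y δ z p q : ℝ} (hy : 0 ≤ y) (hyδ : y ≤ δ) (hyz : y ≤ z)
    (hp : 0 ≤ p) (hq : 0 ≤ q) : y ^ (p + q) ≤ δ ^ p * z ^ q := by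
  rw [Real.rpow_add_of_nonneg hy hp hq]
  have := Real.rpow_nonneg (hy.trans hyδ) p
  gcongr

lemma rpow_le_rpow_sub_mul_rpow {x b p q : ℝ} (hx : 0 < x) (hxb : x ≤ b) (hpq : p ≤ q) :
    x ^ q ≤ b ^ (q - p) * x ^ p := by
  have hpow : x ^ (q - p) ≤ b ^ (q - p) := Real.rpow_le_rpow hx.le hxb (sub_nonneg.2 hpq)
  calc x ^ q = x ^ (q - p) * x ^ p := by rw [← Real.rpow_add hx, sub_add_cancel]
    _ ≤ b ^ (q - p) * x ^ p := by gcongr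

lemma zero_notMem_uIcc_sub {a b c : ℝ} (hc : c ∉ uIcc a b) : 0 ∉ uIcc (a - c) (b - c) := by
  simpa only [mem_uIcc, sub_nonneg, sub_nonpos] using hc

lemma intervalIntegrable_sub_rpow {a b c p : ℝ} (h : -1 < p ∨ c ∉ uIcc a b) :
    IntervalIntegrable (fun x => (x - c) ^ p) volume a b := by
  have hpow : IntervalIntegrable (fun x => x ^ p) volume (a - c) (b - c) := by
    rcases h with hp | hc
    · exact intervalIntegral.intervalIntegrable_rpow' hp
    · exact intervalIntegral.intervalIntegrable_rpow (Or.inr (zero_notMem_uIcc_sub hc))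
  simpa only [sub_add_cancel] using hpow.comp_sub_right c

lemma integral_sub_rpow {a b c p : ℝ} (h : -1 < p ∨ p ≠ -1 ∧ c ∉ uIcc a b) :
    ∫ x in a..b, (x - c) ^ p = ((b - c) ^ (p + 1) - (a - c) ^ (p + 1)) / (p + 1) := by
  rw [intervalIntegral.integral_comp_sub_right (fun x => x ^ p),
    integral_rpow (h.imp_right (And.imp_right zero_notMem_uIcc_sub))]

lemma intervalIntegrable_const_sub_rpow {a b c p : ℝ} (hp : -1 < p) :
    IntervalIntegrable (fun x => (c - x) ^ p) volume a b := by
  simpa using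
    (intervalIntegral.intervalIntegrable_rpow' (a := c - a) (b := c - b) hp).comp_sub_left c

lemma intervalIntegrable_rpow_mul_const_sub_rpow {t p q : ℝ} (ht : 0 ≤ t) (hp : -1 < p)
    (hq : -1 < q) : IntervalIntegrable (fun x => x ^ p * (t - x) ^ q) volume 0 t := by
  obtain rfl | ht := ht.eq_or_lt
  · exact IntervalIntegrable.refl
  have left : IntervalIntegrable (fun x => x ^ p * (t - x) ^ q) volume 0 (t / 2) := by
    refine (intervalIntegral.intervalIntegrable_rpow' hp).mul_continuousOn
      (ContinuousOn.rpow_const (by fun_prop) fun x hx => Or.inl ?_)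
    rw [uIcc_of_le (by positivity)] at hx
    linarith [hx.2]
  have right : IntervalIntegrable (fun x => x ^ p * (t - x) ^ q) volume (t / 2) t := by
    refine (intervalIntegrable_const_sub_rpow hq).continuousOn_mul
      (ContinuousOn.rpow_const (by fun_prop) fun x hx => Or.inl ?_)
    rw [uIcc_of_le (by linarith)] at hx
    linarith [hx.1]
  exact left.trans right

lemma div_sub_rpow_eq_mul {u v x : ℝ} (huv : u ≤ v) (hx : x ≤ v) (β : ℝ) :
    ((v - u) / (v - x)) ^ β = (v - u) ^ β * (v - x) ^ (-β) := by
  rw [Real.div_rpow (sub_nonneg.2 huv) (sub_nonneg.2 hx), Real.rpow_neg (sub_nonneg.2 hx),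
    div_eq_mul_inv]

lemma intervalIntegrable_div_sub_rpow {u v β : ℝ} (huv : u ≤ v) (hβ : β < 1) :
    IntervalIntegrable (fun x => ((v - u) / (v - x)) ^ β) volume u v := by
  refine ((intervalIntegrable_const_sub_rpow (c := v) (p := -β) (by linarith)).const_mul
    ((v - u) ^ β)).congr fun x hx => ?_
  rw [uIoc_of_le huv] at hx
  exact (div_sub_rpow_eq_mul huv hx.2 β).symm

lemma integral_div_sub_rpow {u v β : ℝ} (huv : u < v) (hβ : β < 1) :
    ∫ x in u..v, ((v - u) / (v - x)) ^ β = (v - u) / (1 - β) := by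
  have hΔ : 0 < v - u := sub_pos.2 huv
  calc ∫ x in u..v, ((v - u) / (v - x)) ^ β
      = ∫ x in u..v, (v - u) ^ β * (v - x) ^ (-β) :=
        intervalIntegral.integral_congr fun x hx =>
          div_sub_rpow_eq_mul huv.le (uIcc_of_le huv.le ▸ hx).2 β
    _ = (v - u) ^ β * ((v - u) ^ (1 - β) / (1 - β)) := by
        rw [intervalIntegral.integral_const_mul,
          intervalIntegral.integral_comp_sub_left (fun x => x ^ (-β)), sub_self,
          integral_rpow (Or.inl (by linarith)), neg_add_eq_sub,
          Real.zero_rpow (by linarith), sub_zero]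
    _ = (v - u) / (1 - β) := by
        rw [← mul_div_assoc, ← Real.rpow_add hΔ, add_sub_cancel, Real.rpow_one]

end PowerEstimates

section LpLimits

variable {Ω ι V : Type*} [NormedAddCommGroup V] {mΩ : MeasurableSpace Ω}
  {μ : Measure Ω} {l : Filter ι} {p : ENNReal}

lemma tendsto_eLpNorm_smul_zero [NormedSpace ℝ V] {a : ι → ℝ} {f : ι → Ω → V} {M : ENNReal}
    (hM : M ≠ ⊤) (ha : Tendsto a l (𝓝 0)) (hf : ∀ i, eLpNorm (f i) p μ ≤ M) :
    Tendsto (fun i => eLpNorm (a i • f i) p μ) l (𝓝 0) := by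
  have hbound : Tendsto (fun i => ‖a i‖ₑ * M) l (𝓝 0) := by
    simpa using ENNReal.Tendsto.mul_const ha.enorm (Or.inr hM)
  refine tendsto_of_tendsto_of_tendsto_of_le_of_le tendsto_const_nhds hbound
    (fun _ => zero_le) fun i => ?_
  rw [eLpNorm_const_smul]
  exact mul_le_mul_right (hf i) _

lemma tendsto_eLpNorm_add_zero {f g : ι → Ω → V} (hp : 1 ≤ p)
    (hfm : ∀ i, AEStronglyMeasurable (f i) μ) (hgm : ∀ i, AEStronglyMeasurable (g i) μ)
    (hf : Tendsto (fun i => eLpNorm (f i) p μ) l (𝓝 0))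
    (hg : Tendsto (fun i => eLpNorm (g i) p μ) l (𝓝 0)) :
    Tendsto (fun i => eLpNorm (f i + g i) p μ) l (𝓝 0) := by
  refine tendsto_of_tendsto_of_tendsto_of_le_of_le tendsto_const_nhds (by simpa using hf.add hg)
    (fun _ => zero_le) fun i => eLpNorm_add_le (hfm i) (hgm i) hp

/- Along a subsequence the majorants, hence the errors, tend to zero almost everywhere. -/
lemma aestronglyMeasurable_of_norm_sub_le [l.NeBot] [l.IsCountablyGenerated] {F : ι → Ω → V}
    {f : Ω → V} {g : ι → Ω → ℝ} (hp : p ≠ 0) (hF : ∀ i, AEStronglyMeasurable (F i) μ)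
    (hg : ∀ i, AEStronglyMeasurable (g i) μ) (hFg : ∀ i, ∀ᵐ x ∂μ, ‖F i x - f x‖ ≤ g i x)
    (hlim : Tendsto (fun i => eLpNorm (g i) p μ) l (𝓝 0)) : AEStronglyMeasurable f μ := by
  have hmeasure : TendstoInMeasure μ g l 0 :=
    tendstoInMeasure_of_tendsto_eLpNorm hp hg aestronglyMeasurable_zero (by simpa using hlim)
  obtain ⟨i, -, hi⟩ := hmeasure.exists_seq_tendsto_ae'
  refine aestronglyMeasurable_of_tendsto_ae atTop (fun n => hF (i n)) ?_
  filter_upwards [hi, ae_all_iff.2 fun n => hFg (i n)] with x hx hle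
  exact tendsto_iff_norm_sub_tendsto_zero.2 (squeeze_zero (fun _ => norm_nonneg _) hle hx)

lemma memLp_and_tendsto_of_norm_sub_le [l.NeBot] [l.IsCountablyGenerated] {F : ι → Ω → V}
    {f : Ω → V} {g : ι → Ω → ℝ} (hp : p ≠ 0) (hF : ∀ i, MemLp (F i) p μ)
    (hg : ∀ i, MemLp (g i) p μ) (hFg : ∀ i, ∀ᵐ x ∂μ, ‖F i x - f x‖ ≤ g i x)
    (hlim : Tendsto (fun i => eLpNorm (g i) p μ) l (𝓝 0)) :
    MemLp f p μ ∧ Tendsto (fun i => eLpNorm (F i - f) p μ) l (𝓝 0) := by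
  have hfm : AEStronglyMeasurable f μ := aestronglyMeasurable_of_norm_sub_le hp
    (fun i => (hF i).1) (fun i => (hg i).1) hFg hlim
  constructor
  · obtain ⟨i⟩ := l.nonempty_of_neBot
    have hsub : MemLp (F i - f) p μ := (hg i).mono' ((hF i).1.sub hfm) (hFg i)
    simpa using (hF i).sub hsub
  · exact tendsto_of_tendsto_of_tendsto_of_le_of_le tendsto_const_nhds hlim (fun _ => zero_le)
      fun i => eLpNorm_mono_ae_real (hFg i)

lemma tendsto_integral_mul_of_tendsto_eLpNorm {F G : ι → Ω → ℝ} {f g : Ω → ℝ}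
    (hF : ∀ i, MemLp (F i) 2 μ) (hG : ∀ i, MemLp (G i) 2 μ) (hf : MemLp f 2 μ) (hg : MemLp g 2 μ)
    (hFf : Tendsto (fun i => eLpNorm (F i - f) 2 μ) l (𝓝 0))
    (hGg : Tendsto (fun i => eLpNorm (G i - g) 2 μ) l (𝓝 0)) :
    Tendsto (fun i => ∫ x, F i x * G i x ∂μ) l (𝓝 (∫ x, f x * g x ∂μ)) := by
  have inner_toLp : ∀ {u v : Ω → ℝ} (hu : MemLp u 2 μ) (hv : MemLp v 2 μ),
      inner ℝ (hu.toLp u) (hv.toLp v) = ∫ x, u x * v x ∂μ := by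
    intro u v hu hv
    rw [L2.inner_def]
    refine integral_congr_ae ?_
    filter_upwards [hu.coeFn_toLp, hv.coeFn_toLp] with x hux hvx
    simp only [hux, hvx, RCLike.inner_apply, conj_trivial, mul_comm]
  have hF' := (Lp.tendsto_Lp_iff_tendsto_eLpNorm'' F hF f hf).2 hFf
  have hG' := (Lp.tendsto_Lp_iff_tendsto_eLpNorm'' G hG g hg).2 hGg
  simpa only [inner_toLp] using hF'.inner (𝕜 := ℝ) hG'

end LpLimits

namespace Partition

variable {T : ℝ}

lemma pts_mono (P : Partition T) {i j : ℕ} (hij : i ≤ j) (hj : j ≤ P.n) : P.pts i ≤ P.pts j := by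
  induction j, hij using Nat.le_induction with
  | base => exact le_rfl
  | succ j _ ih => exact (ih (by lia)).trans (P.lt j hj).le

lemma pts_mem_Icc (P : Partition T) {i : ℕ} (hi : i ≤ P.n) : P.pts i ∈ Icc 0 T :=
  ⟨P.first.symm.trans_le (P.pts_mono i.zero_le hi), (P.pts_mono hi le_rfl).trans_eq P.last⟩

lemma pos (P : Partition T) : 0 < T := by
  simpa only [P.first, P.last] using
    (P.lt 0 P.n_pos).trans_le (P.pts_mono P.n_pos le_rfl)

lemma lt_of_pts_lt_pts (P : Partition T) {i j : ℕ} (hi : i ≤ P.n) (h : P.pts i < P.pts j) :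
    i < j :=
  lt_of_not_ge fun hji => h.not_ge (P.pts_mono hji hi)

lemma sub_le_mesh (P : Partition T) {i : ℕ} (hi : i < P.n) :
    P.pts (i + 1) - P.pts i ≤ P.mesh :=
  Finset.le_sup' (fun i => P.pts (i + 1) - P.pts i) (Finset.mem_range.2 hi)

lemma mesh_pos (P : Partition T) : 0 < P.mesh :=
  (sub_pos.2 (P.lt 0 P.n_pos)).trans_le (P.sub_le_mesh P.n_pos)

lemma exists_mem_Ico (P : Partition T) {x : ℝ} (hx : x ∈ Ico 0 T) :
    ∃ k < P.n, x ∈ Ico (P.pts k) (P.pts (k + 1)) := by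
  have hn : x < P.pts P.n := P.last.symm ▸ hx.2
  have hex : ∃ k, x < P.pts k := ⟨P.n, hn⟩
  classical
  have h0 : Nat.find hex ≠ 0 := fun h =>
    (Nat.find_spec hex).not_ge (by rw [h, P.first]; exact hx.1)
  obtain ⟨k, hk⟩ := Nat.exists_eq_succ_of_ne_zero h0
  have hkn : k + 1 ≤ P.n := hk.symm.trans_le (Nat.find_min' hex hn)
  have hxk : x < P.pts (k + 1) := by simpa only [hk] using Nat.find_spec hex
  exact ⟨k, hkn, not_lt.1 (Nat.find_min hex (by lia)), hxk⟩

lemma eq_of_mem_Ico (P : Partition T) {i k : ℕ} (hi : i < P.n) (hk : k < P.n) {x : ℝ}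
    (hxi : x ∈ Ico (P.pts i) (P.pts (i + 1))) (hxk : x ∈ Ico (P.pts k) (P.pts (k + 1))) :
    i = k := by
  have := P.lt_of_pts_lt_pts hi.le (hxi.1.trans_lt hxk.2)
  have := P.lt_of_pts_lt_pts hk.le (hxk.1.trans_lt hxi.2)
  lia

lemma sum_indicator_Ico_of_mem {V : Type*} [AddCommMonoid V] (P : Partition T) (f : ℕ → ℝ → V)
    {k : ℕ} (hk : k < P.n) {x : ℝ} (hx : x ∈ Ico (P.pts k) (P.pts (k + 1))) :
    ∑ i ∈ Finset.range P.n, (Ico (P.pts i) (P.pts (i + 1))).indicator (f i) x = f k x := by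
  rw [Finset.sum_eq_single_of_mem k (Finset.mem_range.2 hk), indicator_of_mem hx]
  intro i hi hik
  exact indicator_of_notMem (fun hxi => hik (P.eq_of_mem_Ico (Finset.mem_range.1 hi) hk hxi hx)) _

lemma step1_of_mem_Ico {V : Type*} [NormedAddCommGroup V] (P : Partition T) (φ : ℝ → V) {k : ℕ}
    (hk : k < P.n) {x : ℝ} (hx : x ∈ Ico (P.pts k) (P.pts (k + 1))) : step1 P φ x = φ (P.pts k) :=
  P.sum_indicator_Ico_of_mem (fun i _ => φ (P.pts i)) hk hx

/-- The partition of `[0,T]` into `n + 1` intervals of equal length. -/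
def uniform (hT : 0 < T) (n : ℕ) : Partition T where
  n := n + 1
  pts i := i * (T / (n + 1))
  n_pos := n.succ_pos
  first := by simp
  last := by push_cast; field_simp
  lt i _ := by
    have : 0 < T / (n + 1) := by positivity
    push_cast
    linarith

lemma mesh_uniform (hT : 0 < T) (n : ℕ) : (uniform hT n).mesh = T / (n + 1) := by
  have hstep : ∀ i : ℕ, ((i + 1 : ℕ) : ℝ) * (T / (n + 1)) - i * (T / (n + 1)) = T / (n + 1) :=
    fun i => by push_cast; ring
  simp only [mesh, uniform, hstep, Finset.sup'_const]

/-- The filter of partitions of `[0,T]` whose mesh tends to `0`. -/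
def vanishingMesh (T : ℝ) : Filter (Partition T) := comap mesh (𝓝 0)

instance : (vanishingMesh T).IsCountablyGenerated := comap.isCountablyGenerated _ _

lemma vanishingMesh_neBot (hT : 0 < T) : (vanishingMesh T).NeBot := by
  have hlim : Tendsto (fun n : ℕ => (uniform hT n).mesh) atTop (𝓝 0) := by
    simpa only [mesh_uniform, div_eq_mul_one_div T, mul_zero] using
      tendsto_one_div_add_atTop_nhds_zero_nat.const_mul T
  exact (tendsto_comap_iff.2 hlim).neBot

lemma tendsto_mesh_rpow {p : ℝ} (hp : 0 < p) :
    Tendsto (fun P : Partition T => P.mesh ^ p) (vanishingMesh T) (𝓝 0) := by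
  have hmesh : Tendsto (mesh (T := T)) (vanishingMesh T) (𝓝 0) := tendsto_comap
  simpa only [Real.zero_rpow hp.ne'] using hmesh.rpow_const (Or.inr hp.le)

/-- The function `((v - u) / (v - x)) ^ α` on each cell `[u, v)` of the partition. It carries the
singularity of the Volterra kernel at the right end of the cell, and its norm in `L²(0,T)` does not
depend on the partition. -/
def cellRatio (P : Partition T) (α x : ℝ) : ℝ :=
  ∑ i ∈ Finset.range P.n, (Ico (P.pts i) (P.pts (i + 1))).indicator
    (fun x => ((P.pts (i + 1) - P.pts i) / (P.pts (i + 1) - x)) ^ α) x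

lemma cellRatio_of_mem_Ico (P : Partition T) (α : ℝ) {k : ℕ} (hk : k < P.n) {x : ℝ}
    (hx : x ∈ Ico (P.pts k) (P.pts (k + 1))) :
    P.cellRatio α x = ((P.pts (k + 1) - P.pts k) / (P.pts (k + 1) - x)) ^ α :=
  P.sum_indicator_Ico_of_mem _ hk hx

lemma measurable_cellRatio (P : Partition T) (α : ℝ) : Measurable (P.cellRatio α) := by
  unfold cellRatio
  exact Finset.measurable_fun_sum _ fun i _ =>
    Measurable.indicator (by fun_prop) measurableSet_Ico

lemma cellRatio_sq_of_mem_Ioo (P : Partition T) (α : ℝ) {k : ℕ} (hk : k < P.n) {x : ℝ}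
    (hx : x ∈ Ioo (P.pts k) (P.pts (k + 1))) :
    P.cellRatio α x ^ 2 =
      ((P.pts (k + 1) - P.pts k) / (P.pts (k + 1) - x)) ^ (2 * α) := by
  have hratio : 0 ≤ (P.pts (k + 1) - P.pts k) / (P.pts (k + 1) - x) :=
    div_nonneg (sub_pos.2 (P.lt k hk)).le (sub_pos.2 hx.2).le
  rw [P.cellRatio_of_mem_Ico α hk (Ioo_subset_Ico_self hx), ← Real.rpow_mul_natCast hratio,
    mul_comm α]
  norm_num

lemma intervalIntegrable_cellRatio_sq (P : Partition T) {α : ℝ} (hα : α < 1 / 2) {k : ℕ}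
    (hk : k < P.n) :
    IntervalIntegrable (fun x => P.cellRatio α x ^ 2) volume (P.pts k) (P.pts (k + 1)) := by
  refine (intervalIntegrable_div_sub_rpow (P.lt k hk).le (β := 2 * α)
    (by linarith)).congr_uIoo fun x hx => ?_
  rw [uIoo_of_le (P.lt k hk).le] at hx
  exact (P.cellRatio_sq_of_mem_Ioo α hk hx).symm

lemma integral_cellRatio_sq (P : Partition T) {α : ℝ} (hα : α < 1 / 2) :
    ∫ x in (0 : ℝ)..T, P.cellRatio α x ^ 2 = T / (1 - 2 * α) := by
  have hcell : ∀ k ∈ Finset.range P.n, ∫ x in P.pts k..P.pts (k + 1), P.cellRatio α x ^ 2 =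
      (P.pts (k + 1) - P.pts k) / (1 - 2 * α) := by
    intro k hk
    have hk := Finset.mem_range.1 hk
    rw [← integral_div_sub_rpow (P.lt k hk) (by linarith : 2 * α < 1)]
    refine intervalIntegral.integral_congr_uIoo fun x hx => ?_
    rw [uIoo_of_le (P.lt k hk).le] at hx
    exact P.cellRatio_sq_of_mem_Ioo α hk hx
  have hsum := intervalIntegral.sum_integral_adjacent_intervals (a := P.pts) (n := P.n)
    fun _ => P.intervalIntegrable_cellRatio_sq hα
  rw [P.first, P.last] at hsum
  rw [← hsum, Finset.sum_congr rfl hcell, ← Finset.sum_div, Finset.sum_range_sub, P.first, P.last,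
    sub_zero]

lemma memLp_cellRatio (P : Partition T) {α : ℝ} (hα : α < 1 / 2) :
    MemLp (P.cellRatio α) 2 (volume.restrict (Ioo 0 T)) := by
  rw [memLp_two_iff_integrable_sq (P.measurable_cellRatio α).aestronglyMeasurable]
  have hint : IntervalIntegrable (fun x => P.cellRatio α x ^ 2) volume (P.pts 0) (P.pts P.n) :=
    IntervalIntegrable.trans_iterate fun _ => P.intervalIntegrable_cellRatio_sq hα
  rwa [P.first, P.last, intervalIntegrable_iff_integrableOn_Ioo_of_le P.pos.le] at hint

lemma eLpNorm_cellRatio (P : Partition T) {α : ℝ} (hα : α < 1 / 2) :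
    eLpNorm (P.cellRatio α) 2 (volume.restrict (Ioo 0 T)) =
      ENNReal.ofReal (√(T / (1 - 2 * α))) := by
  rw [(P.memLp_cellRatio hα).eLpNorm_eq_integral_rpow_norm two_ne_zero ENNReal.ofNat_ne_top]
  simp only [ENNReal.toReal_ofNat, Real.rpow_ofNat, Real.norm_eq_abs, sq_abs]
  rw [← integral_Ioc_eq_integral_Ioo, ← intervalIntegral.integral_of_le P.pos.le,
    P.integral_cellRatio_sq hα, Real.sqrt_eq_rpow, one_div]

end Partition

section Holder

variable {V : Type*} [NormedAddCommGroup V] {T lam H : ℝ} {φ : ℝ → V}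

lemma IsHolderWith.const_nonneg (hφ : IsHolderWith T lam H φ) (hT : 0 < T) : 0 ≤ H := by
  have h := (norm_nonneg _).trans (hφ T (right_mem_Icc.2 hT.le) 0 (left_mem_Icc.2 hT.le))
  rw [sub_zero, abs_of_pos hT] at h
  exact nonneg_of_mul_nonneg_left h (Real.rpow_pos_of_pos hT lam)

lemma IsHolderWith.norm_sub_le (hφ : IsHolderWith T lam H φ) {s t : ℝ} (hs : 0 ≤ s) (hst : s ≤ t)
    (htT : t ≤ T) : ‖φ t - φ s‖ ≤ H * (t - s) ^ lam := by
  simpa only [abs_of_nonneg (sub_nonneg.2 hst)] using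
    hφ t ⟨hs.trans hst, htT⟩ s ⟨hs, hst.trans htT⟩

lemma IsHolderWith.continuousOn (hφ : IsHolderWith T lam H φ) (hlam : 0 < lam) :
    ContinuousOn φ (Icc 0 T) := by
  intro x hx
  rw [ContinuousWithinAt, tendsto_iff_norm_sub_tendsto_zero]
  have hcont : ContinuousAt (fun y => H * |y - x| ^ lam) x :=
    continuousAt_const.mul (ContinuousAt.rpow_const (by fun_prop) (Or.inr hlam.le))
  have hlim : Tendsto (fun y => H * |y - x| ^ lam) (𝓝[Icc 0 T] x) (𝓝 0) := by
    simpa only [sub_self, abs_zero, Real.zero_rpow hlam.ne', mul_zero] using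
      hcont.tendsto.mono_left nhdsWithin_le_nhds
  refine squeeze_zero' (Eventually.of_forall fun _ => norm_nonneg _) ?_ hlim
  filter_upwards [self_mem_nhdsWithin] with y hy using hφ y hy x hx

end Holder

lemma ae_mem_Ioc_imp_of_forall_mem_Ioo {p : ℝ → Prop} {a b : ℝ} (h : ∀ x ∈ Ioo a b, p x) :
    ∀ᵐ x, x ∈ Ioc a b → p x := by
  filter_upwards [Measure.ae_ne volume b] with x hxb hx using h x ⟨hx.1, hx.2.lt_of_ne hxb⟩

lemma ae_restrict_Ioc_of_forall_mem_Ioo {p : ℝ → Prop} {a b : ℝ} (h : ∀ x ∈ Ioo a b, p x) :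
    ∀ᵐ x ∂volume.restrict (Ioc a b), p x :=
  (ae_restrict_iff' measurableSet_Ioc).2 (ae_mem_Ioc_imp_of_forall_mem_Ioo h)

namespace CondA

variable {T α C : ℝ} {K K' : ℝ → ℝ → ℝ}

lemma const_nonneg (hA : CondA T α C K K') (hT : 0 < T) : 0 ≤ C := by
  have h := (abs_nonneg _).trans (hA.2 (T / 2) T (half_pos hT) (half_lt_self hT) le_rfl).2
  exact nonneg_of_mul_nonneg_left h (Real.rpow_pos_of_pos (by linarith) _)

lemma of_exponent_le (hA : CondA T α C K K') (hT : 0 < T) {β : ℝ} (hαβ : α ≤ β) :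
    CondA T β (C * max 1 (T ^ (β - α)) ^ 2) K K' := by
  have hC := hA.const_nonneg hT
  set M := max 1 (T ^ (β - α))
  have hM : 1 ≤ M := le_max_left _ _
  have hpow : ∀ {x : ℝ} (p : ℝ), 0 < x → x ≤ T → x ^ (-(α + p)) ≤ M * x ^ (-(β + p)) := by
    intro x p hx hxT
    have h := rpow_le_rpow_sub_mul_rpow hx hxT (by linarith : -(β + p) ≤ -(α + p))
    rw [show -(α + p) - -(β + p) = β - α by ring] at h
    exact h.trans (by gcongr; exact le_max_right _ _)
  constructor <;> intro s t hs hst ht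
  · have h₁ := hpow 0 hs (by linarith)
    have h₂ := hpow 0 (sub_pos.2 hst) (by linarith)
    simp only [add_zero] at h₁ h₂
    have := Real.rpow_nonneg (sub_pos.2 hst).le (-α)
    calc |K t s| ≤ C * s ^ (-α) * (t - s) ^ (-α) := hA.1 s t hs hst ht
      _ ≤ C * (M * s ^ (-β)) * (M * (t - s) ^ (-β)) := by gcongr
      _ = C * M ^ 2 * s ^ (-β) * (t - s) ^ (-β) := by ring
  · refine ⟨(hA.2 s t hs hst ht).1, ?_⟩
    have := Real.rpow_nonneg (sub_pos.2 hst).le (-(β + 1))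
    calc |K' t s| ≤ C * (t - s) ^ (-(α + 1)) := (hA.2 s t hs hst ht).2
      _ ≤ C * (M * (t - s) ^ (-(β + 1))) := by
        gcongr; exact hpow 1 (sub_pos.2 hst) (by linarith)
      _ ≤ C * (M ^ 2 * (t - s) ^ (-(β + 1))) := by
        gcongr; exact le_self_pow₀ hM two_ne_zero
      _ = C * M ^ 2 * (t - s) ^ (-(β + 1)) := by ring

lemma memLp_kernel (hA : CondA T α C K K') (hK : IsVolterraKernel K) (hα : α < 1 / 2) {t : ℝ}
    (ht : t ∈ Icc 0 T) : MemLp (K t) 2 (volume.restrict (Ioo 0 T)) := by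
  have hmeas : Measurable (K t) := hK.1.of_uncurry_left
  have hpow : IntegrableOn (fun s => C ^ 2 * (s ^ (-2 * α) * (t - s) ^ (-2 * α))) (Ioo 0 t) :=
    (intervalIntegrable_iff_integrableOn_Ioo_of_le ht.1).1
      ((intervalIntegrable_rpow_mul_const_sub_rpow ht.1 (by linarith)
        (by linarith)).const_mul (C ^ 2))
  rw [memLp_two_iff_integrable_sq hmeas.aestronglyMeasurable]
  refine ((integrable_indicator_iff measurableSet_Ioo).2 hpow).restrict.mono'
    (hmeas.pow_const 2).aestronglyMeasurable ?_
  filter_upwards [ae_restrict_mem measurableSet_Ioo] with s hs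
  rw [Real.norm_of_nonneg (sq_nonneg _)]
  by_cases hst : s < t
  · have hsq : ∀ {x : ℝ}, 0 < x → x ^ (-2 * α) = (x ^ (-α)) ^ 2 := fun hx => by
      rw [← Real.rpow_mul_natCast hx.le]; congr 1; push_cast; ring
    rw [indicator_of_mem (show s ∈ Ioo 0 t from ⟨hs.1, hst⟩), hsq hs.1, hsq (sub_pos.2 hst),
      ← mul_pow, ← mul_pow, ← mul_assoc, ← sq_abs]
    exact pow_le_pow_left₀ (abs_nonneg _) (hA.1 s t hs.1 hst ht.2) 2
  · rw [hK.2 t s (not_lt.1 hst), indicator_of_notMem fun h => hst h.2, zero_pow two_ne_zero]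

lemma aestronglyMeasurable_deriv (hA : CondA T α C K K') {r a b : ℝ} (hr : 0 < r) (hra : r ≤ a)
    (hbT : b ≤ T) : AEStronglyMeasurable (fun x => K' x r) (volume.restrict (Ioc a b)) := by
  refine (measurable_deriv fun x => K x r).aestronglyMeasurable.congr ?_
  filter_upwards [ae_restrict_mem measurableSet_Ioc] with x hx
  exact (hA.2 r x hr (hra.trans_lt hx.1) (hx.2.trans hbT)).1.deriv

lemma intervalIntegrable_deriv (hA : CondA T α C K K') {r a b : ℝ} (hr : 0 < r) (hra : r < a)
    (hab : a ≤ b) (hbT : b ≤ T) : IntervalIntegrable (fun x => K' x r) volume a b := by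
  have hpow := (intervalIntegrable_sub_rpow (p := -(α + 1)) (Or.inr (notMem_uIcc_of_lt hra
    (hra.trans_le hab)))).const_mul C
  refine hpow.mono_fun' ?_ ?_ <;> rw [uIoc_of_le hab]
  · exact hA.aestronglyMeasurable_deriv hr hra.le hbT
  · filter_upwards [ae_restrict_mem measurableSet_Ioc] with x hx
    exact (hA.2 r x hr (hra.trans hx.1) (hx.2.trans hbT)).2

lemma integral_deriv (hA : CondA T α C K K') {r a b : ℝ} (hr : 0 < r) (hra : r < a)
    (hab : a ≤ b) (hbT : b ≤ T) : ∫ x in a..b, K' x r = K b r - K a r := by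
  refine intervalIntegral.integral_eq_sub_of_hasDerivAt (f := fun x => K x r) (fun x hx => ?_)
    (hA.intervalIntegrable_deriv hr hra hab hbT)
  rw [uIcc_of_le hab] at hx
  exact (hA.2 r x hr (hra.trans_le hx.1) (hx.2.trans hbT)).1

lemma abs_kernel_sub_le (hA : CondA T α C K K') (hα : 0 < α) {r a b : ℝ} (hr : 0 < r)
    (hra : r < a) (hab : a ≤ b) (hbT : b ≤ T) :
    |K b r - K a r| ≤ C / α * (a - r) ^ (-α) := by
  have hC := hA.const_nonneg (by linarith)
  have hr_notMem : r ∉ uIcc a b := notMem_uIcc_of_lt hra (hra.trans_le hab)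
  have hbound := intervalIntegral.norm_integral_le_of_norm_le (μ := volume)
    (f := fun x => K' x r) hab
    (Eventually.of_forall fun x hx => (hA.2 r x hr (hra.trans hx.1) (hx.2.trans hbT)).2)
    ((intervalIntegrable_sub_rpow (Or.inr hr_notMem)).const_mul C)
  have hb : 0 ≤ C / α * (b - r) ^ (-α) :=
    mul_nonneg (by positivity) (Real.rpow_nonneg (by linarith) _)
  calc |K b r - K a r| ≤ ∫ x in a..b, C * (x - r) ^ (-(α + 1)) := by
        rwa [hA.integral_deriv hr hra hab hbT] at hbound
    _ = C / α * (a - r) ^ (-α) - C / α * (b - r) ^ (-α) := by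
        rw [intervalIntegral.integral_const_mul,
          integral_sub_rpow (Or.inr ⟨by linarith, hr_notMem⟩),
          show -(α + 1) + 1 = -α by ring]
        field_simp
        ring
    _ ≤ C / α * (a - r) ^ (-α) := sub_le_self _ hb

section WeightedIntegral

variable {r a b p D : ℝ} {ψ : ℝ → E}

lemma norm_deriv_smul_le (hA : CondA T α C K K') (hr : 0 < r) (hra : r ≤ a) (hbT : b ≤ T)
    (hψ : ∀ x ∈ Ioo a b, ‖ψ x‖ ≤ D * (x - r) ^ (α + p)) :
    ∀ x ∈ Ioo a b, ‖K' x r • ψ x‖ ≤ C * D * (x - r) ^ (p - 1) := by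
  intro x hx
  have hrx : 0 < x - r := by linarith [hx.1]
  have hderiv := (hA.2 r x hr (by linarith) (hx.2.le.trans hbT)).2
  calc ‖K' x r • ψ x‖ = |K' x r| * ‖ψ x‖ := by rw [norm_smul, Real.norm_eq_abs]
    _ ≤ C * (x - r) ^ (-(α + 1)) * (D * (x - r) ^ (α + p)) :=
        mul_le_mul hderiv (hψ x hx) (norm_nonneg _) ((abs_nonneg _).trans hderiv)
    _ = C * D * (x - r) ^ (p - 1) := by
        rw [mul_mul_mul_comm, ← Real.rpow_add hrx]
        congr 2
        ring

lemma intervalIntegrable_deriv_smul (hA : CondA T α C K K') (hr : 0 < r) (hra : r ≤ a)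
    (hab : a ≤ b) (hbT : b ≤ T) (hp : 0 < p)
    (hψm : AEStronglyMeasurable ψ (volume.restrict (Ioc a b)))
    (hψ : ∀ x ∈ Ioo a b, ‖ψ x‖ ≤ D * (x - r) ^ (α + p)) :
    IntervalIntegrable (fun x => K' x r • ψ x) volume a b := by
  have hpow := (intervalIntegrable_sub_rpow (a := a) (b := b) (c := r) (p := p - 1)
    (Or.inl (by linarith))).const_mul (C * D)
  refine hpow.mono_fun' ?_ ?_ <;> rw [uIoc_of_le hab]
  · exact (hA.aestronglyMeasurable_deriv hr hra hbT).smul hψm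
  · exact ae_restrict_Ioc_of_forall_mem_Ioo (hA.norm_deriv_smul_le hr hra hbT hψ)

lemma norm_integral_deriv_smul_le (hA : CondA T α C K K') (hr : 0 < r) (hra : r ≤ a)
    (hab : a ≤ b) (hbT : b ≤ T) (hp : 0 < p)
    (hψ : ∀ x ∈ Ioo a b, ‖ψ x‖ ≤ D * (x - r) ^ (α + p)) :
    ‖∫ x in a..b, K' x r • ψ x‖ ≤ C * D * (((b - r) ^ p - (a - r) ^ p) / p) := by
  have hp' : -1 < p - 1 := by linarith
  calc ‖∫ x in a..b, K' x r • ψ x‖ ≤ ∫ x in a..b, C * D * (x - r) ^ (p - 1) :=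
        intervalIntegral.norm_integral_le_of_norm_le hab
          (ae_mem_Ioc_imp_of_forall_mem_Ioo (hA.norm_deriv_smul_le hr hra hbT hψ))
          ((intervalIntegrable_sub_rpow (Or.inl hp')).const_mul _)
    _ = C * D * (((b - r) ^ p - (a - r) ^ p) / p) := by
        rw [intervalIntegral.integral_const_mul, integral_sub_rpow (Or.inl hp'), sub_add_cancel]

end WeightedIntegral

end CondA

section Kstar

variable {T : ℝ} {K K' : ℝ → ℝ → ℝ}

/-- Convergence of the integral defining `Kstar T K K' φ s`, which takes a junk value otherwise. -/
def KstarIntegrableAt (T : ℝ) (K' : ℝ → ℝ → ℝ) (φ : ℝ → E) (s : ℝ) : Prop :=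
  IntervalIntegrable (fun r => K' r s • (φ r - φ s)) volume s T

section Linearity

variable {φ ψ : ℝ → E} {s : ℝ}

lemma smul_sub_sub_sub (c : ℝ) (x y z w : E) :
    c • ((x - y) - (z - w)) = c • (x - z) - c • (y - w) := by
  rw [← smul_sub, sub_sub_sub_comm]

lemma KstarIntegrableAt.sub (hφ : KstarIntegrableAt T K' φ s) (hψ : KstarIntegrableAt T K' ψ s) :
    KstarIntegrableAt T K' (φ - ψ) s := by
  simpa only [KstarIntegrableAt, Pi.sub_apply, smul_sub_sub_sub] using IntervalIntegrable.sub hφ hψ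

lemma Kstar_sub (hφ : KstarIntegrableAt T K' φ s) (hψ : KstarIntegrableAt T K' ψ s) :
    Kstar T K K' (φ - ψ) s = Kstar T K K' φ s - Kstar T K K' ψ s := by
  simp only [Kstar, Pi.sub_apply, smul_sub_sub_sub]
  rw [intervalIntegral.integral_sub hφ hψ, smul_sub, add_sub_add_comm]

variable {ι : Type*} {A : Finset ι} {f : ι → ℝ → E}

lemma KstarIntegrableAt.finsetSum (hf : ∀ i ∈ A, KstarIntegrableAt T K' (f i) s) :
    KstarIntegrableAt T K' (fun x => ∑ i ∈ A, f i x) s := by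
  simpa only [KstarIntegrableAt, ← Finset.sum_sub_distrib, Finset.smul_sum, Finset.sum_fn] using
    IntervalIntegrable.sum A hf

lemma Kstar_finsetSum (hf : ∀ i ∈ A, KstarIntegrableAt T K' (f i) s) :
    Kstar T K K' (fun x => ∑ i ∈ A, f i x) s = ∑ i ∈ A, Kstar T K K' (f i) s := by
  simp only [Kstar, ← Finset.sum_sub_distrib, Finset.smul_sum]
  rw [intervalIntegral.integral_finsetSum hf, Finset.sum_add_distrib]

end Linearity

section StepFunctions

variable {α C r a : ℝ}

lemma eqOn_smul_indicator_Ici_sub_of_lt (hra : r < a) (c : E) :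
    EqOn (fun x => K' x r • ((Ici a).indicator (fun _ => c) x - (Ici a).indicator (fun _ => c) r))
      0 (uIoo r a) := fun x hx => by
  rw [uIoo_of_le hra.le] at hx
  simp [hx.2, hra]

lemma eqOn_smul_indicator_Ici_sub_right (hra : r < a) (haT : a ≤ T) (c : E) :
    EqOn (fun x => K' x r • ((Ici a).indicator (fun _ => c) x - (Ici a).indicator (fun _ => c) r))
      (fun x => K' x r • c) (uIoo a T) := fun x hx => by
  rw [uIoo_of_le haT] at hx
  simp [hx.1.le, hra]

lemma eqOn_smul_indicator_Ici_sub_of_le (har : a ≤ r) (hrT : r ≤ T) (c : E) :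
    EqOn (fun x => K' x r • ((Ici a).indicator (fun _ => c) x - (Ici a).indicator (fun _ => c) r))
      0 (uIoo r T) := fun x hx => by
  rw [uIoo_of_le hrT] at hx
  simp [har, har.trans hx.1.le]

lemma CondA.intervalIntegrable_smul_indicator_Ici_sub (hA : CondA T α C K K') (hr : 0 < r)
    (hra : r < a) (haT : a ≤ T) (c : E) :
    IntervalIntegrable
        (fun x => K' x r • ((Ici a).indicator (fun _ => c) x - (Ici a).indicator (fun _ => c) r))
        volume r a ∧
      IntervalIntegrable
        (fun x => K' x r • ((Ici a).indicator (fun _ => c) x - (Ici a).indicator (fun _ => c) r))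
        volume a T := by
  have hderiv := hA.intervalIntegrable_deriv hr hra haT le_rfl
  have hsmul : IntervalIntegrable (fun x => K' x r • c) volume a T :=
    ⟨hderiv.1.smul_const c, hderiv.2.smul_const c⟩
  exact ⟨intervalIntegrable_const.congr_uIoo (eqOn_smul_indicator_Ici_sub_of_lt hra c).symm,
    hsmul.congr_uIoo (eqOn_smul_indicator_Ici_sub_right hra haT c).symm⟩

lemma CondA.kstarIntegrableAt_indicator_Ici (hA : CondA T α C K K') (hr : r ∈ Ioo 0 T)
    (haT : a ≤ T) (c : E) : KstarIntegrableAt T K' ((Ici a).indicator fun _ => c) r := by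
  rcases lt_or_ge r a with hra | har
  · have hint := hA.intervalIntegrable_smul_indicator_Ici_sub hr.1 hra haT c
    exact hint.1.trans hint.2
  · exact intervalIntegrable_const.congr_uIoo
      (eqOn_smul_indicator_Ici_sub_of_le har hr.2.le c).symm

lemma CondA.Kstar_indicator_Ici [CompleteSpace E] (hA : CondA T α C K K') (hK : IsVolterraKernel K)
    (hr : r ∈ Ioo 0 T) (haT : a ≤ T) (c : E) :
    Kstar T K K' ((Ici a).indicator fun _ => c) r = (K T r - K a r) • c := by
  rcases lt_or_ge r a with hra | har
  · have hint := hA.intervalIntegrable_smul_indicator_Ici_sub hr.1 hra haT c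
    rw [Kstar, ← intervalIntegral.integral_add_adjacent_intervals hint.1 hint.2,
      intervalIntegral.integral_congr_uIoo (eqOn_smul_indicator_Ici_sub_of_lt hra c),
      intervalIntegral.integral_congr_uIoo (eqOn_smul_indicator_Ici_sub_right hra haT c),
      intervalIntegral.integral_smul_const, hA.integral_deriv hr.1 hra haT le_rfl]
    simp [hra]
  · rw [Kstar, intervalIntegral.integral_congr_uIoo
      (eqOn_smul_indicator_Ici_sub_of_le har hr.2.le c), hK.2 a r har]
    simp [har]

lemma indicator_Ico_eq_sub {V : Type*} [AddGroup V] {a b : ℝ} (hab : a ≤ b) (f : ℝ → V) :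
    (Ico a b).indicator f = (Ici a).indicator f - (Ici b).indicator f := by
  rw [← Ici_sdiff_Ici, indicator_sdiff (Ici_subset_Ici.2 hab), sub_eq_add_neg]

lemma CondA.kstarIntegrableAt_indicator_Ico (hA : CondA T α C K K') (hr : r ∈ Ioo 0 T) {b : ℝ}
    (hab : a ≤ b) (hbT : b ≤ T) (c : E) :
    KstarIntegrableAt T K' ((Ico a b).indicator fun _ => c) r := by
  rw [indicator_Ico_eq_sub hab]
  exact (hA.kstarIntegrableAt_indicator_Ici hr (hab.trans hbT) c).sub
    (hA.kstarIntegrableAt_indicator_Ici hr hbT c)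

lemma CondA.Kstar_indicator_Ico [CompleteSpace E] (hA : CondA T α C K K')
    (hK : IsVolterraKernel K) (hr : r ∈ Ioo 0 T) {b : ℝ} (hab : a ≤ b) (hbT : b ≤ T) (c : E) :
    Kstar T K K' ((Ico a b).indicator fun _ => c) r = (K b r - K a r) • c := by
  rw [indicator_Ico_eq_sub hab, Kstar_sub (hA.kstarIntegrableAt_indicator_Ici hr (hab.trans hbT) c)
    (hA.kstarIntegrableAt_indicator_Ici hr hbT c), hA.Kstar_indicator_Ici hK hr (hab.trans hbT),
    hA.Kstar_indicator_Ici hK hr hbT, ← sub_smul, sub_sub_sub_cancel_left]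

lemma CondA.kstarIntegrableAt_step1 (hA : CondA T α C K K') (hr : r ∈ Ioo 0 T) (P : Partition T)
    (φ : ℝ → E) : KstarIntegrableAt T K' (step1 P φ) r :=
  KstarIntegrableAt.finsetSum fun i hi =>
    have hi := Finset.mem_range.1 hi
    hA.kstarIntegrableAt_indicator_Ico hr (P.lt i hi).le (P.pts_mem_Icc hi).2 _

lemma CondA.Kstar_step1 [CompleteSpace E] (hA : CondA T α C K K') (hK : IsVolterraKernel K)
    (hr : r ∈ Ioo 0 T) (P : Partition T) (φ : ℝ → E) :
    Kstar T K K' (step1 P φ) r =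
      ∑ i ∈ Finset.range P.n, (K (P.pts (i + 1)) r - K (P.pts i) r) • φ (P.pts i) := by
  unfold step1
  rw [Kstar_finsetSum fun i hi => ?_]
  · refine Finset.sum_congr rfl fun i hi => ?_
    have hi := Finset.mem_range.1 hi
    exact hA.Kstar_indicator_Ico hK hr (P.lt i hi).le (P.pts_mem_Icc hi).2 _
  · have hi := Finset.mem_range.1 hi
    exact hA.kstarIntegrableAt_indicator_Ico hr (P.lt i hi).le (P.pts_mem_Icc hi).2 _

lemma CondA.memLp_Kstar_step1 [CompleteSpace E] (hA : CondA T α C K K') (hK : IsVolterraKernel K)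
    (hα : α < 1 / 2) (P : Partition T) (φ : ℝ → E) :
    MemLp (Kstar T K K' (step1 P φ)) 2 (volume.restrict (Ioo 0 T)) := by
  have hsum : MemLp (fun r => ∑ i ∈ Finset.range P.n,
      (K (P.pts (i + 1)) r - K (P.pts i) r) • φ (P.pts i)) 2 (volume.restrict (Ioo 0 T)) := by
    refine memLp_finsetSum _ fun i hi => ?_
    have hi := Finset.mem_range.1 hi
    exact (ContinuousLinearMap.toSpanSingleton ℝ (φ (P.pts i))).comp_memLp'
      ((hA.memLp_kernel hK hα (P.pts_mem_Icc hi)).sub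
        (hA.memLp_kernel hK hα (P.pts_mem_Icc hi.le)))
  refine hsum.ae_eq ?_
  filter_upwards [ae_restrict_mem measurableSet_Ioo] with r hr
  exact (hA.Kstar_step1 hK hr P φ).symm

end StepFunctions

section SplitBound

variable {α C r v : ℝ} {g : ℝ → E}

lemma CondA.intervalIntegrable_deriv_smul_of_kstarIntegrableAt (hA : CondA T α C K K')
    (hr : 0 < r) (hrv : r < v) (hvT : v ≤ T) (hg : KstarIntegrableAt T K' g r) :
    IntervalIntegrable (fun x => K' x r • g x) volume v T := by
  have hderiv := hA.intervalIntegrable_deriv hr hrv hvT le_rfl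
  have hsub : IntervalIntegrable (fun x => K' x r • (g x - g r)) volume v T :=
    IntervalIntegrable.mono_set hg (uIcc_subset_uIcc_right (by simp [mem_uIcc, hrv.le, hvT]))
  simpa only [← smul_add, sub_add_cancel] using
    hsub.add ⟨hderiv.1.smul_const (g r), hderiv.2.smul_const (g r)⟩

/- On `[v,T]` the constant `g r` integrates to `(K T r - K v r) • g r`, which turns the boundary
term at `T` into one at `v`. -/
lemma CondA.Kstar_eq_add_add [CompleteSpace E] (hA : CondA T α C K K') (hr : 0 < r) (hrv : r < v)
    (hvT : v ≤ T) (hg : KstarIntegrableAt T K' g r) :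
    Kstar T K K' g r = K v r • g r + (∫ x in r..v, K' x r • (g x - g r)) +
      ∫ x in v..T, K' x r • g x := by
  have hderiv := hA.intervalIntegrable_deriv hr hrv hvT le_rfl
  have hfar := hA.intervalIntegrable_deriv_smul_of_kstarIntegrableAt hr hrv hvT hg
  have hv : v ∈ uIcc r T := by simp [mem_uIcc, hrv.le, hvT]
  have hsplit : ∫ x in v..T, K' x r • (g x - g r) =
      (∫ x in v..T, K' x r • g x) - (K T r - K v r) • g r := by
    simp only [smul_sub]
    rw [intervalIntegral.integral_sub hfar ⟨hderiv.1.smul_const _, hderiv.2.smul_const _⟩,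
      intervalIntegral.integral_smul_const, hA.integral_deriv hr hrv hvT le_rfl]
  rw [Kstar, ← intervalIntegral.integral_add_adjacent_intervals
    (IntervalIntegrable.mono_set hg (uIcc_subset_uIcc_left hv))
    (IntervalIntegrable.mono_set hg (uIcc_subset_uIcc_right hv)), hsplit, sub_smul]
  abel

lemma CondA.norm_Kstar_le [CompleteSpace E] (hA : CondA T α C K K') (hr : 0 < r) (hrv : r < v)
    (hvT : v ≤ T) (hg : KstarIntegrableAt T K' g r) {p D : ℝ} (hp : 0 < p)
    (hnear : ∀ x ∈ Ioo r v, ‖g x - g r‖ ≤ D * (x - r) ^ (α + p))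
    (hfar : ∀ x ∈ Ioo v T, ‖g x‖ ≤ D * (x - r) ^ (α + p)) :
    ‖Kstar T K K' g r‖ ≤ |K v r| * ‖g r‖ + C * D * ((T - r) ^ p / p) := by
  have hnear_int := hA.norm_integral_deriv_smul_le hr le_rfl hrv.le hvT hp hnear
  have hfar_int := hA.norm_integral_deriv_smul_le hr hrv.le hvT le_rfl hp hfar
  rw [sub_self, Real.zero_rpow hp.ne'] at hnear_int
  rw [hA.Kstar_eq_add_add hr hrv hvT hg]
  refine norm_add₃_le.trans ?_
  rw [norm_smul, Real.norm_eq_abs]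
  linear_combination hnear_int + hfar_int

end SplitBound

section Holder

variable {α C lam H r : ℝ} {φ : ℝ → E}

lemma IsHolderWith.kstarIntegrableAt (hφ : IsHolderWith T lam H φ) (hA : CondA T α C K K')
    (hlam : 0 < lam) (hαlam : α < lam) (hr : r ∈ Ioo 0 T) : KstarIntegrableAt T K' φ r := by
  refine hA.intervalIntegrable_deriv_smul hr.1 le_rfl hr.2.le le_rfl (sub_pos.2 hαlam)
    (D := H) ?_ fun x hx => ?_
  · exact (((hφ.continuousOn hlam).mono (Ioc_subset_Icc_self.trans
      (Icc_subset_Icc_left hr.1.le))).sub continuousOn_const).aestronglyMeasurable measurableSet_Ioc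
  · rw [add_sub_cancel]
    exact hφ.norm_sub_le hr.1.le hx.1.le hx.2.le

end Holder

end Kstar

section StepError

variable {V : Type*} [NormedAddCommGroup V] {T α C lam H : ℝ} {K K' : ℝ → ℝ → ℝ} {φ : ℝ → V}

lemma IsHolderWith.norm_step1_sub_le (hφ : IsHolderWith T lam H φ) (P : Partition T) {k : ℕ}
    (hk : k < P.n) {x : ℝ} (hx : x ∈ Ico (P.pts k) (P.pts (k + 1))) :
    ‖step1 P φ x - φ x‖ ≤ H * (x - P.pts k) ^ lam := by
  rw [P.step1_of_mem_Ico φ hk hx, norm_sub_rev]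
  exact hφ.norm_sub_le (P.pts_mem_Icc hk.le).1 hx.1 (hx.2.le.trans (P.pts_mem_Icc hk).2)

lemma IsHolderWith.norm_step1_sub_sub_le_of_mem_Ioo (hφ : IsHolderWith T lam H φ)
    {P : Partition T} {k : ℕ} (hk : k < P.n) {r : ℝ} (hr : r ∈ Ico (P.pts k) (P.pts (k + 1)))
    {p q : ℝ} (hp : 0 ≤ p) (hq : 0 ≤ q) (hpq : p + q = lam) :
    ∀ x ∈ Ioo r (P.pts (k + 1)), ‖(step1 P φ - φ) x - (step1 P φ - φ) r‖ ≤
      H * P.mesh ^ p * (x - r) ^ q := by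
  intro x hx
  have hr0 : 0 ≤ r := (P.pts_mem_Icc hk.le).1.trans hr.1
  have hxT : x ≤ T := hx.2.le.trans (P.pts_mem_Icc hk).2
  have hmesh : x - r ≤ P.mesh := by linarith [P.sub_le_mesh hk, hx.2, hr.1]
  have hH := hφ.const_nonneg P.pos
  calc ‖(step1 P φ - φ) x - (step1 P φ - φ) r‖ = ‖φ x - φ r‖ := by
        rw [Pi.sub_apply, Pi.sub_apply, P.step1_of_mem_Ico φ hk hr,
          P.step1_of_mem_Ico φ hk ⟨hr.1.trans hx.1.le, hx.2⟩, sub_sub_sub_cancel_left, norm_sub_rev]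
    _ ≤ H * (x - r) ^ (p + q) := hpq ▸ hφ.norm_sub_le hr0 hx.1.le hxT
    _ ≤ H * (P.mesh ^ p * (x - r) ^ q) := by
        gcongr
        exact rpow_add_le_rpow_mul_rpow (sub_pos.2 hx.1).le hmesh le_rfl hp hq
    _ = H * P.mesh ^ p * (x - r) ^ q := by ring

lemma IsHolderWith.norm_step1_sub_le_of_mem_Ioo (hφ : IsHolderWith T lam H φ)
    {P : Partition T} {k : ℕ} (hk : k < P.n) {r : ℝ} (hr : r ∈ Ico (P.pts k) (P.pts (k + 1)))
    {p q : ℝ} (hp : 0 ≤ p) (hq : 0 ≤ q) (hpq : p + q = lam) :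
    ∀ x ∈ Ioo (P.pts (k + 1)) T, ‖(step1 P φ - φ) x‖ ≤ H * P.mesh ^ p * (x - r) ^ q := by
  intro x hx
  obtain ⟨m, hm, hxm⟩ := P.exists_mem_Ico ⟨(P.pts_mem_Icc hk).1.trans hx.1.le, hx.2⟩
  have hkm : P.pts (k + 1) ≤ P.pts m :=
    P.pts_mono (Nat.lt_succ_iff.1 (P.lt_of_pts_lt_pts hk (hx.1.trans hxm.2))) hm.le
  have hmesh : x - P.pts m ≤ P.mesh := by linarith [P.sub_le_mesh hm, hxm.2]
  have hH := hφ.const_nonneg P.pos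
  calc ‖(step1 P φ - φ) x‖ ≤ H * (x - P.pts m) ^ (p + q) := hpq ▸ hφ.norm_step1_sub_le P hm hxm
    _ ≤ H * (P.mesh ^ p * (x - r) ^ q) := by
        gcongr
        exact rpow_add_le_rpow_mul_rpow (sub_nonneg.2 hxm.1) hmesh (by linarith [hr.2]) hp hq
    _ = H * P.mesh ^ p * (x - r) ^ q := by ring

lemma CondA.abs_kernel_mul_norm_step1_sub_le (hA : CondA T α C K K')
    (hφ : IsHolderWith T lam H φ) (hα : 0 < α) (hαlam : α ≤ lam) {P : Partition T} {k : ℕ}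
    (hk : k < P.n) {r : ℝ} (hr0 : 0 < r) (hr : r ∈ Ico (P.pts k) (P.pts (k + 1))) :
    |K (P.pts (k + 1)) r| * ‖step1 P φ r - φ r‖ ≤
      P.mesh ^ lam * (H * |K T r|) + P.mesh ^ (lam - α) * (H * (C / α) * P.cellRatio α r) := by
  set u := P.pts k
  set v := P.pts (k + 1)
  have hH := hφ.const_nonneg P.pos
  have hC := hA.const_nonneg P.pos
  have hmesh : r - u ≤ P.mesh := by linarith [P.sub_le_mesh hk, hr.2]
  have hru : 0 ≤ r - u := sub_nonneg.2 hr.1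
  have hkernel : |K v r| ≤ |K T r| + C / α * (v - r) ^ (-α) := by
    have := hA.abs_kernel_sub_le hα hr0 hr.2 (P.pts_mem_Icc hk).2 le_rfl
    linarith [abs_sub_abs_le_abs_sub (K v r) (K T r), abs_sub_comm (K v r) (K T r)]
  have hpow : (r - u) ^ lam ≤ P.mesh ^ lam := Real.rpow_le_rpow hru hmesh (hα.le.trans hαlam)
  have hpow' : (r - u) ^ lam ≤ P.mesh ^ (lam - α) * (v - u) ^ α := by
    simpa only [sub_add_cancel] using rpow_add_le_rpow_mul_rpow hru hmesh
      (sub_le_sub_right hr.2.le u) (sub_nonneg.2 hαlam) hα.le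
  have hvr : 0 ≤ (v - r) ^ (-α) := Real.rpow_nonneg (sub_pos.2 hr.2).le _
  calc |K v r| * ‖step1 P φ r - φ r‖
      ≤ (|K T r| + C / α * (v - r) ^ (-α)) * (H * (r - u) ^ lam) := by
        gcongr
        exact hφ.norm_step1_sub_le P hk hr
    _ = (r - u) ^ lam * (H * |K T r|) + (r - u) ^ lam * (H * (C / α) * (v - r) ^ (-α)) := by ring
    _ ≤ P.mesh ^ lam * (H * |K T r|) +
          P.mesh ^ (lam - α) * (v - u) ^ α * (H * (C / α) * (v - r) ^ (-α)) := by gcongr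
    _ = _ := by
        rw [P.cellRatio_of_mem_Ico α hk hr, div_sub_rpow_eq_mul (P.lt k hk).le hr.2.le]
        ring

lemma CondA.norm_Kstar_step1_sub_le [CompleteSpace E] {φ : ℝ → E}
    (hA : CondA T α C K K') (hφ : IsHolderWith T lam H φ) (hα : 0 < α) {p q : ℝ} (hp : 0 ≤ p)
    (hq : 0 < q) (hpq : p + (α + q) = lam) (P : Partition T) {r : ℝ} (hr : r ∈ Ioo 0 T) :
    ‖Kstar T K K' (step1 P φ) r - Kstar T K K' φ r‖ ≤
      P.mesh ^ lam * (H * |K T r|) + P.mesh ^ (lam - α) * (H * (C / α) * P.cellRatio α r) +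
        P.mesh ^ p * (C * H * (T ^ q / q)) := by
  obtain ⟨k, hk, hrk⟩ := P.exists_mem_Ico ⟨hr.1.le, hr.2⟩
  have hint := (hA.kstarIntegrableAt_step1 hr P φ).sub
    (hφ.kstarIntegrableAt hA (by linarith) (by linarith) hr)
  have hbound := hA.norm_Kstar_le hr.1 hrk.2 (P.pts_mem_Icc hk).2 hint hq
    (hφ.norm_step1_sub_sub_le_of_mem_Ioo hk hrk hp (by linarith) hpq)
    (hφ.norm_step1_sub_le_of_mem_Ioo hk hrk hp (by linarith) hpq)
  have hpow : (T - r) ^ q ≤ T ^ q :=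
    Real.rpow_le_rpow (sub_pos.2 hr.2).le (by linarith [hr.1]) hq.le
  have hH := hφ.const_nonneg P.pos
  have hC := hA.const_nonneg P.pos
  have hmesh := P.mesh_pos
  rw [← Kstar_sub (hA.kstarIntegrableAt_step1 hr P φ)
    (hφ.kstarIntegrableAt hA (by linarith) (by linarith) hr)]
  refine hbound.trans (add_le_add
    (hA.abs_kernel_mul_norm_step1_sub_le hφ hα (by linarith) hk hr.1 hrk) ?_)
  calc C * (H * P.mesh ^ p) * ((T - r) ^ q / q) ≤ C * (H * P.mesh ^ p) * (T ^ q / q) := by gcongr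
    _ = P.mesh ^ p * (C * H * (T ^ q / q)) := by ring

lemma CondA.memLp_and_tendsto_Kstar_step1 [CompleteSpace E] {φ : ℝ → E} (hA : CondA T α C K K')
    (hK : IsVolterraKernel K) (hφ : IsHolderWith T lam H φ) (hT : 0 < T) (hα : 0 < α)
    (hα' : α < 1 / 2) (hαlam : α < lam) :
    MemLp (Kstar T K K' φ) 2 (volume.restrict (Ioo 0 T)) ∧
      Tendsto (fun P => eLpNorm (Kstar T K K' (step1 P φ) - Kstar T K K' φ) 2
        (volume.restrict (Ioo 0 T))) (Partition.vanishingMesh T) (𝓝 0) := by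
  obtain ⟨q, hq, hqlam⟩ : ∃ q, 0 < q ∧ q + (α + q) = lam := ⟨(lam - α) / 2, by linarith, by ring⟩
  have : (Partition.vanishingMesh T).NeBot := Partition.vanishingMesh_neBot hT
  let bT : ℝ → ℝ := fun r => H * |K T r|
  let bCell : Partition T → ℝ → ℝ := fun P => (H * (C / α)) • P.cellRatio α
  let bConst : ℝ → ℝ := fun _ => C * H * (T ^ q / q)
  have hbT : MemLp bT 2 (volume.restrict (Ioo 0 T)) :=
    (hA.memLp_kernel hK hα' (right_mem_Icc.2 hT.le)).abs.const_mul H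
  have hbCell : ∀ P, MemLp (bCell P) 2 (volume.restrict (Ioo 0 T)) := fun P =>
    (P.memLp_cellRatio hα').const_smul _
  have hbConst : MemLp bConst 2 (volume.restrict (Ioo 0 T)) := memLp_const _
  have hbCell_le : ∀ P, eLpNorm (bCell P) 2 (volume.restrict (Ioo 0 T)) ≤
      ‖H * (C / α)‖ₑ * ENNReal.ofReal (√(T / (1 - 2 * α))) := fun P => by
    rw [eLpNorm_const_smul, P.eLpNorm_cellRatio hα']
  refine memLp_and_tendsto_of_norm_sub_le two_ne_zero
    (g := fun P => P.mesh ^ lam • bT + P.mesh ^ (lam - α) • bCell P + P.mesh ^ q • bConst)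
    (fun P => hA.memLp_Kstar_step1 hK hα' P φ)
    (fun P => ((hbT.const_smul _).add ((hbCell P).const_smul _)).add (hbConst.const_smul _))
    (fun P => ?_) ?_
  · filter_upwards [ae_restrict_mem measurableSet_Ioo] with r hr
    exact hA.norm_Kstar_step1_sub_le hφ hα hq.le hq hqlam P hr
  · refine tendsto_eLpNorm_add_zero one_le_two (fun P => ((hbT.const_smul _).add
      ((hbCell P).const_smul _)).1) (fun P => (hbConst.const_smul _).1)
      (tendsto_eLpNorm_add_zero one_le_two (fun P => (hbT.const_smul _).1)
        (fun P => ((hbCell P).const_smul _).1) ?_ ?_) ?_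
    · exact tendsto_eLpNorm_smul_zero hbT.2.ne (Partition.tendsto_mesh_rpow (by linarith))
        fun _ => le_rfl
    · exact tendsto_eLpNorm_smul_zero (ENNReal.mul_ne_top enorm_ne_top ENNReal.ofReal_ne_top)
        (Partition.tendsto_mesh_rpow (by linarith)) hbCell_le
    · exact tendsto_eLpNorm_smul_zero hbConst.2.ne (Partition.tendsto_mesh_rpow hq) fun _ => le_rfl

end StepError

section Covariance

variable {T α C : ℝ} {K K' : ℝ → ℝ → ℝ}

lemma covR_eq_setIntegral (hK : IsVolterraKernel K) {s t : ℝ} (hs : s ∈ Icc 0 T)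
    (ht : t ∈ Icc 0 T) : covR K s t = ∫ r in Ioo 0 T, K s r * K t r := by
  rw [covR, intervalIntegral.integral_of_le (le_min hs.1 ht.1), ← integral_Ioc_eq_integral_Ioo,
    ← setIntegral_eq_of_subset_of_forall_sdiff_eq_zero measurableSet_Ioc
      (Ioc_subset_Ioc_right (min_le_of_left_le hs.2)) fun r hr => ?_]
  · simp only [mul_comm]
  · have hr' : min s t < r := not_le.1 fun h => hr.2 ⟨hr.1.1, h⟩
    rcases min_lt_iff.1 hr' with hsr | htr
    · rw [hK.2 s r hsr.le, mul_zero]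
    · rw [hK.2 t r htr.le, zero_mul]

lemma CondA.rectInc_covR (hA : CondA T α C K K') (hK : IsVolterraKernel K) (hα : α < 1 / 2)
    {u₁ u₂ v₁ v₂ : ℝ} (hu₁ : u₁ ∈ Icc 0 T) (hu₂ : u₂ ∈ Icc 0 T) (hv₁ : v₁ ∈ Icc 0 T)
    (hv₂ : v₂ ∈ Icc 0 T) :
    rectInc (covR K) u₁ u₂ v₁ v₂ = ∫ r in Ioo 0 T, (K u₂ r - K u₁ r) * (K v₂ r - K v₁ r) := by
  have hint : ∀ {s t : ℝ}, s ∈ Icc 0 T → t ∈ Icc 0 T →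
      Integrable (fun r => K s r * K t r) (volume.restrict (Ioo 0 T)) := fun hs ht =>
    (hA.memLp_kernel hK hα hs).integrable_mul (hA.memLp_kernel hK hα ht)
  have hdiag : Integrable (fun r => K u₁ r * K v₁ r + K u₂ r * K v₂ r)
      (volume.restrict (Ioo 0 T)) := (hint hu₁ hv₁).add (hint hu₂ hv₂)
  have hdiff : Integrable (fun r => K u₁ r * K v₁ r + K u₂ r * K v₂ r - K u₁ r * K v₂ r)
      (volume.restrict (Ioo 0 T)) := hdiag.sub (hint hu₁ hv₂)
  rw [rectInc, covR_eq_setIntegral hK hu₁ hv₁, covR_eq_setIntegral hK hu₂ hv₂,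
    covR_eq_setIntegral hK hu₁ hv₂, covR_eq_setIntegral hK hu₂ hv₁,
    ← integral_add (hint hu₁ hv₁) (hint hu₂ hv₂), ← integral_sub hdiag (hint hu₁ hv₂),
    ← integral_sub hdiff (hint hu₂ hv₁)]
  exact integral_congr_ae (.of_forall fun r => by ring)

lemma CondA.RSsum_covR (hA : CondA T α C K K') (hK : IsVolterraKernel K) (hα : α < 1 / 2)
    (P Q : Partition T) (φ₁ φ₂ : ℝ → ℝ) :
    RSsum P Q (fun s t => φ₁ s * φ₂ t) (covR K) =
      ∫ r in Ioo 0 T, Kstar T K K' (step1 P φ₁) r * Kstar T K K' (step1 Q φ₂) r := by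
  have hmem : ∀ (R : Partition T) {i : ℕ}, i ∈ Finset.range R.n →
      R.pts i ∈ Icc 0 T ∧ R.pts (i + 1) ∈ Icc 0 T := fun R i hi =>
    ⟨R.pts_mem_Icc (Finset.mem_range.1 hi).le, R.pts_mem_Icc (Finset.mem_range.1 hi)⟩
  have hinc : ∀ (R : Partition T) (φ : ℝ → ℝ) {i : ℕ}, i ∈ Finset.range R.n →
      MemLp (fun r => (K (R.pts (i + 1)) r - K (R.pts i) r) * φ (R.pts i)) 2
        (volume.restrict (Ioo 0 T)) := fun R φ i hi =>
    ((hA.memLp_kernel hK hα (hmem R hi).2).sub (hA.memLp_kernel hK hα (hmem R hi).1)).mul_const _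
  have hint : ∀ i ∈ Finset.range P.n, ∀ j ∈ Finset.range Q.n, Integrable (fun r =>
      (K (P.pts (i + 1)) r - K (P.pts i) r) * φ₁ (P.pts i) *
        ((K (Q.pts (j + 1)) r - K (Q.pts j) r) * φ₂ (Q.pts j))) (volume.restrict (Ioo 0 T)) :=
    fun i hi j hj => (hinc P φ₁ hi).integrable_mul (hinc Q φ₂ hj)
  symm
  calc ∫ r in Ioo 0 T, Kstar T K K' (step1 P φ₁) r * Kstar T K K' (step1 Q φ₂) r
      = ∫ r in Ioo 0 T, ∑ i ∈ Finset.range P.n, ∑ j ∈ Finset.range Q.n,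
          (K (P.pts (i + 1)) r - K (P.pts i) r) * φ₁ (P.pts i) *
            ((K (Q.pts (j + 1)) r - K (Q.pts j) r) * φ₂ (Q.pts j)) :=
        setIntegral_congr_fun measurableSet_Ioo fun r hr => by
          simp only [hA.Kstar_step1 hK hr, smul_eq_mul, Finset.sum_mul_sum]
    _ = ∑ i ∈ Finset.range P.n, ∑ j ∈ Finset.range Q.n, ∫ r in Ioo 0 T,
          (K (P.pts (i + 1)) r - K (P.pts i) r) * φ₁ (P.pts i) *
            ((K (Q.pts (j + 1)) r - K (Q.pts j) r) * φ₂ (Q.pts j)) := by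
        rw [integral_finsetSum _ fun i hi => integrable_finsetSum _ (hint i hi)]
        exact Finset.sum_congr rfl fun i hi => integral_finsetSum _ (hint i hi)
    _ = RSsum P Q (fun s t => φ₁ s * φ₂ t) (covR K) := by
        refine Finset.sum_congr rfl fun i hi => Finset.sum_congr rfl fun j hj => ?_
        rw [hA.rectInc_covR hK hα (hmem P hi).1 (hmem P hi).2 (hmem Q hj).1 (hmem Q hj).2,
          ← integral_const_mul]
        simp only [mul_comm, mul_assoc, mul_left_comm]

end Covariance

section YoungIntegral

variable {T α : ℝ} {K K' : ℝ → ℝ → ℝ}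

theorem IsHolder.memLp_and_tendsto_Kstar_step1 [CompleteSpace E] {φ : ℝ → E} {lam : ℝ}
    (hφ : IsHolder T lam φ) (hT : 0 < T) (hα : α < 1 / 2) (hK : IsVolterraKernel K)
    (hA : ∃ C, CondA T α C K K') (hlam : 0 < lam) (hαlam : α < lam) :
    MemLp (Kstar T K K' φ) 2 (volume.restrict (Ioo 0 T)) ∧
      Tendsto (fun P => eLpNorm (Kstar T K K' (step1 P φ) - Kstar T K K' φ) 2
        (volume.restrict (Ioo 0 T))) (Partition.vanishingMesh T) (𝓝 0) := by
  obtain ⟨C, hA⟩ := hA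
  obtain ⟨H, hφ⟩ := hφ
  obtain ⟨β, hβ, hβ'⟩ : ∃ β, max 0 α < β ∧ β < min (1 / 2) lam :=
    exists_between (max_lt (lt_min one_half_pos hlam) (lt_min hα hαlam))
  rw [max_lt_iff] at hβ
  rw [lt_min_iff] at hβ'
  exact (hA.of_exponent_le hT hβ.2.le).memLp_and_tendsto_Kstar_step1 hK hφ hT hβ.1 hβ'.1 hβ'.2

theorem tendsto_RSsum_covR (hT : 0 < T) (hα : α < 1 / 2) (hK : IsVolterraKernel K)
    (hA : ∃ C, CondA T α C K K') {φ₁ φ₂ : ℝ → ℝ} {lam₁ lam₂ : ℝ} (hlam₁ : 0 < lam₁)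
    (hlam₂ : 0 < lam₂) (hφ₁ : IsHolder T lam₁ φ₁) (hφ₂ : IsHolder T lam₂ φ₂) (hαlam₁ : α < lam₁)
    (hαlam₂ : α < lam₂) :
    Tendsto (fun R : Partition T × Partition T =>
        RSsum R.1 R.2 (fun s t => φ₁ s * φ₂ t) (covR K))
      (Partition.vanishingMesh T ×ˢ Partition.vanishingMesh T)
      (𝓝 (∫ r in (0 : ℝ)..T, Kstar T K K' φ₁ r * Kstar T K K' φ₂ r)) := by
  obtain ⟨hmem₁, hlim₁⟩ := hφ₁.memLp_and_tendsto_Kstar_step1 hT hα hK hA hlam₁ hαlam₁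
  obtain ⟨hmem₂, hlim₂⟩ := hφ₂.memLp_and_tendsto_Kstar_step1 hT hα hK hA hlam₂ hαlam₂
  obtain ⟨C, hA⟩ := hA
  rw [intervalIntegral.integral_of_le hT.le, integral_Ioc_eq_integral_Ioo]
  simp only [hA.RSsum_covR hK hα]
  exact tendsto_integral_mul_of_tendsto_eLpNorm (fun R => hA.memLp_Kstar_step1 hK hα R.1 φ₁)
    (fun R => hA.memLp_Kstar_step1 hK hα R.2 φ₂) hmem₁ hmem₂ (hlim₁.comp tendsto_fst)
    (hlim₂.comp tendsto_snd)

lemma Partition.tendsto_vanishingMesh_prod_iff {f : Partition T → Partition T → ℝ} {I : ℝ} :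
    Tendsto (fun R : Partition T × Partition T => f R.1 R.2)
        (vanishingMesh T ×ˢ vanishingMesh T) (𝓝 I) ↔
      ∀ ε > 0, ∃ δ > 0, ∀ P Q : Partition T, max P.mesh Q.mesh < δ → |f P Q - I| < ε := by
  have hbasis := (Metric.nhds_basis_ball (x := (0 : ℝ)).comap (mesh (T := T))).prod_self
  unfold vanishingMesh
  rw [hbasis.tendsto_iff Metric.nhds_basis_ball]
  simp only [Prod.forall, mem_prod, mem_preimage, Metric.mem_ball, Real.dist_eq, sub_zero,
    abs_of_pos (mesh_pos _), max_lt_iff]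

end YoungIntegral

theorem youngIntegral_covR_prod_general (T α lam₁ lam₂ : ℝ) (hT : 0 < T) (hα : α < 1 / 2)
    (K K' : ℝ → ℝ → ℝ) (hK : IsVolterraKernel K) (hA : ∃ C : ℝ, CondA T α C K K')
    (φ₁ φ₂ : ℝ → ℝ) (hlam₁ : 0 < lam₁) (hlam₂ : 0 < lam₂) (hφ₁ : IsHolder T lam₁ φ₁)
    (hφ₂ : IsHolder T lam₂ φ₂) (hαlam₁ : α < lam₁) (hαlam₂ : α < lam₂) :
    ∀ ε > 0, ∃ δ > 0, ∀ P Q : Partition T, max P.mesh Q.mesh < δ →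
      |RSsum P Q (fun s t => φ₁ s * φ₂ t) (covR K) -
        ∫ r in (0:ℝ)..T, Kstar T K K' φ₁ r * Kstar T K K' φ₂ r| < ε :=
  Partition.tendsto_vanishingMesh_prod_iff.1
    (tendsto_RSsum_covR hT hα hK hA hlam₁ hlam₂ hφ₁ hφ₂ hαlam₁ hαlam₂)

/-- for a product integrand `φ₁(s)φ₂(t)` of `λ`-Hölder functions with
`λ > α`, the 2D Young–Stieltjes integral against `R` exists and equals
`∫_0^T (𝒦*φ₁)(r)(𝒦*φ₂)(r) dr`. -/
theorem youngIntegral_covR_prod (T α lam : ℝ) (hT : 0 < T) (hα : 0 ≤ α) (hα' : α < 1 / 4)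
    (K K' : ℝ → ℝ → ℝ) (hK : IsVolterraKernel K) (hA : ∃ C : ℝ, CondA T α C K K')
    (φ₁ φ₂ : ℝ → ℝ) (hlam : 0 < lam) (hlam' : lam ≤ 1)
    (hφ₁ : IsHolder T lam φ₁) (hφ₂ : IsHolder T lam φ₂) (hαlam : α < lam) :
    ∀ ε > 0, ∃ δ > 0, ∀ P Q : Partition T, max P.mesh Q.mesh < δ →
      |RSsum P Q (fun s t => φ₁ s * φ₂ t) (covR K) -
        ∫ r in (0:ℝ)..T, Kstar T K K' φ₁ r * Kstar T K K' φ₂ r| < ε :=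
  youngIntegral_covR_prod_general T α lam lam hT (by linarith) K K' hK hA φ₁ φ₂ hlam hlam hφ₁ hφ₂
    hαlam hαlam

end YS
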